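/- For all i, j ∈ {0, 1, …, r−1} the following are equivalent: (1) m(j) > [i]; (2) the only pair of integers (x, y) with 0 ≤ x ≤ [−a·j], 0 ≤ y ≤ [i], and y ≡ b·x (mod r) is (x, y) = (0, 0). (In other words, w_j·w_i = w_{i+j} in R_{r,a} exactly when the lattice rectangle with corners (0,0) and ([−a·j], [i]) contains no point of the sublattice Γ = {(x,y) ∈ Z² : y ≡ b·x (mod r)} other than the origin.) -/

import Mathlib

/-!
A lattice point `(x, y)` of `Γ` with `0 ≤ y < r` is determined by its abscissa: `y` is the residue
`[x·b]`. On the column `x = 0` this leaves only the origin, so the rectangle with corners `(0, 0)`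
and `([-a·j], [i])` contains a further point of `Γ` exactly when `[k·b] ≤ [i]` for some
`1 ≤ k ≤ [-a·j]`, that is, when the minimum defining `m j` is at most `[i]`.

Two points need care. For `j = 0` the rectangle is the segment `x = 0` and `m 0 = r > [i]`, so both
sides hold. For `j ≠ 0` the minimum is over a nonempty set, because `a` is invertible modulo `r`
and hence `[-a·j] ≥ 1` (`one_le_val_neg_mul`); otherwise `sInf` would return the junk value `0`.
-/

/-- The function `m : ZMod r → ℕ` of the Kalck–Karmazyn algebra: `m 0 = r` and, for `j ≠ 0`,
`m j = min_{1 ≤ k ≤ [-a·j]} [k·b]`, where `[x]` denotes the representative in `{0,…,r-1}`. -/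
noncomputable def KKm (r a b : ℕ) (j : ZMod r) : ℕ :=
  if j = 0 then r
  else sInf {v : ℕ | ∃ k : ℕ, 1 ≤ k ∧ k ≤ ((-(a : ZMod r)) * j).val ∧ v = (k * b) % r}

/-- The index set of the minimum defining `m j` is nonempty when `j ≠ 0`. -/
theorem one_le_val_neg_mul {r a b : ℕ} [NeZero r] (hab : a * b % r = 1) (hr : 1 < r)
    {j : ZMod r} (hj : j ≠ 0) : 1 ≤ ((-(a : ZMod r)) * j).val := by
  have hunit : (a : ZMod r) * b = 1 := by
    have h : ((a * b : ℕ) : ZMod r) = ((1 : ℕ) : ZMod r) :=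
      (ZMod.natCast_eq_natCast_iff' _ _ _).2 (by rw [hab, Nat.mod_eq_of_lt hr])
    exact_mod_cast h
  rw [Nat.one_le_iff_ne_zero, ne_eq, ZMod.val_eq_zero]
  intro h
  apply hj
  linear_combination (-(b : ZMod r)) * h - j * hunit

/-- A point of `Γ` whose ordinate lies in `[0, r)` has ordinate `[x·b]`. -/
theorem eq_mod_of_modEq {r b y : ℕ} {x : ℕ} (hy : y < r)
    (h : (y : ℤ) ≡ (b : ℤ) * x [ZMOD (r : ℤ)]) : y = (x * b) % r := by
  have h' : y ≡ x * b [MOD r] := by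
    rw [← Int.natCast_modEq_iff]
    push_cast
    rwa [mul_comm (x : ℤ)]
  rw [← Nat.mod_eq_of_lt hy]
  exact h'

/-- For `j ≠ 0`, the infimum in `m j` is an actual minimum, so `n < m j` can be tested on each
`[k·b]`. -/
theorem lt_KKm_iff {r a b : ℕ} [NeZero r] (hab : a * b % r = 1) (hr : 1 < r)
    {j : ZMod r} (hj : j ≠ 0) (n : ℕ) :
    n < KKm r a b j ↔
      ∀ k : ℕ, 1 ≤ k → k ≤ ((-(a : ZMod r)) * j).val → n < (k * b) % r := by
  rw [KKm, if_neg hj]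
  constructor
  · intro h k hk hk'
    exact h.trans_le (Nat.sInf_le ⟨k, hk, hk', rfl⟩)
  · intro h
    obtain ⟨k, hk, hk', hv⟩ := Nat.sInf_mem
      (s := {v : ℕ | ∃ k : ℕ, 1 ≤ k ∧ k ≤ ((-(a : ZMod r)) * j).val ∧ v = (k * b) % r})
      ⟨_, 1, le_rfl, one_le_val_neg_mul hab hr hj, rfl⟩
    rw [hv]
    exact h k hk hk'

/-- `m j > [i]` holds if and only if the only point `(x, y)` of the sublattice
`Γ = {(x,y) : y ≡ b·x (mod r)}` in the rectangle `[0, [-a·j]] × [0, [i]]` is the origin. -/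
theorem kalckKarmazyn_product_iff_lattice_rectangle (r a b : ℕ)
    [NeZero r] (ha : 0 < a) (har : a < r) (hcop : Nat.Coprime a r)
    (hb : 0 < b) (hbr : b < r) (hab : a * b % r = 1) :
    ∀ i j : ZMod r,
      i.val < KKm r a b j ↔
        ∀ x y : ℤ, 0 ≤ x → x ≤ (((-(a : ZMod r)) * j).val : ℤ) →
          0 ≤ y → y ≤ (i.val : ℤ) → y ≡ (b : ℤ) * x [ZMOD (r : ℤ)] →
          x = 0 ∧ y = 0 := by
  intro i j
  have hr : 1 < r := by omega
  have hi : i.val < r := ZMod.val_lt i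
  by_cases hj : j = 0
  · subst hj
    refine iff_of_true (by rwa [KKm, if_pos rfl]) ?_
    intro x y hx hx' hy hy' hxy
    rw [mul_zero, ZMod.val_zero] at hx'
    lift x to ℕ using hx
    lift y to ℕ using hy
    have hx0 : x = 0 := by omega
    have hyx := eq_mod_of_modEq (by omega) hxy
    subst hx0
    simpa using hyx
  · rw [lt_KKm_iff hab hr hj]
    constructor
    · intro h x y hx hx' hy hy' hxy
      lift x to ℕ using hx
      lift y to ℕ using hy
      have hyx := eq_mod_of_modEq (by omega) hxy
      rcases Nat.eq_zero_or_pos x with hx0 | hx0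
      · subst hx0
        simpa using hyx
      · have := h x hx0 (by exact_mod_cast hx')
        omega
    · intro h k hk hk'
      by_contra! hle
      -- Otherwise `(k, [k·b])` is a point of `Γ` in the rectangle with nonzero abscissa.
      have hmod : (((k * b) % r : ℕ) : ℤ) ≡ (b : ℤ) * k [ZMOD (r : ℤ)] := by
        rw [mul_comm (b : ℤ)]
        exact_mod_cast Int.natCast_modEq_iff.2 (Nat.mod_modEq (k * b) r)
      have := (h k ((k * b) % r : ℕ) (by omega) (by exact_mod_cast hk') (by omega)
        (by exact_mod_cast hle) hmod).1
      omega
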